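/- arXiv:1003.4620 — 5 statements merged into one kernel-verified Lean document; each statement's English description precedes it below -/
import Mathlib

section
/- Let H be a complex Hilbert space with Hilbert basis Φ = (Φ_n)_{n∈ℕ}, let X, Y : H → H be continuous linear bijections with continuous inverses, set φ_n = X(Φ_n), Ψ_n = Y(Φ_n), and assume ⟨φ_n, Ψ_m⟩ = δ_{nm} for all n,m. Then for every f ∈ H the series Σ_{n≥0} ⟨Ψ_n, f⟩·φ_n converges in H and equals f, and likewise Σ_{n≥0} ⟨φ_n, f⟩·Ψ_n = f. -/
open MeasureTheory InnerProductSpace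
open scoped InnerProductSpace ComplexConjugate

/-!
Continuity of `X` carries the expansion of `X⁻¹ f` in the Hilbert basis `Φ` to an expansion of `f`
along `X Φₙ`, and pairing it with the biorthogonal family `Ψ` identifies its coefficients as
`⟪Ψₙ, f⟫`. Moreover, biorthogonality says that `X† Ψₙ = Φₙ`, so `Ψₙ = (X⁻¹)† Φₙ` is itself the
image of `Φ` under an invertible operator, and the roles of the two families can be exchanged.
-/

section Biorthogonal

open ContinuousLinearMap (adjoint adjoint_inner_left)

variable {ι 𝕜 E H : Type*} [RCLike 𝕜]
  [NormedAddCommGroup E] [InnerProductSpace 𝕜 E] [NormedAddCommGroup H] [InnerProductSpace 𝕜 H]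

theorem hasSum_inner_hilbertBasis_smul_map (Φ : HilbertBasis ι 𝕜 E) (T : E →L[𝕜] H) (e : E) :
    HasSum (fun i => ⟪Φ i, e⟫_𝕜 • T (Φ i)) (T e) := by
  simpa only [Φ.repr_apply_apply, map_smul] using (Φ.hasSum_repr e).mapL T

theorem adjoint_symm_adjoint_apply [CompleteSpace E] [CompleteSpace H] (X : E ≃L[𝕜] H) (f : H) :
    adjoint (X.symm : H →L[𝕜] E) (adjoint (X : E →L[𝕜] H) f) = f :=
  ext_inner_right 𝕜 fun g => by
    simp only [adjoint_inner_left, ContinuousLinearEquiv.coe_coe,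
      ContinuousLinearEquiv.apply_symm_apply]

variable [DecidableEq ι]

variable (𝕜) in
/-- Two families of vectors with the same index set are biorthogonal if `⟪x i, y j⟫ = δ i j`. The
coefficients of an expansion along one of them are then inner products with the other. -/
def Biorthogonal (x y : ι → H) : Prop :=
  ∀ i j, ⟪x i, y j⟫_𝕜 = if i = j then 1 else 0

namespace Biorthogonal

theorem symm {x y : ι → H} (h : Biorthogonal 𝕜 x y) : Biorthogonal 𝕜 y x := fun i j => by
  rw [← inner_conj_symm, h j i, apply_ite (starRingEnd 𝕜), map_one, map_zero]
  simp only [eq_comm]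

theorem inner_eq_of_hasSum {x y : ι → H} (h : Biorthogonal 𝕜 y x) {c : ι → 𝕜} {f : H}
    (hf : HasSum (fun j => c j • x j) f) (i : ι) : ⟪y i, f⟫_𝕜 = c i := by
  have hinner : HasSum (fun j => ⟪y i, c j • x j⟫_𝕜) ⟪y i, f⟫_𝕜 := hf.mapL (innerSL 𝕜 (y i))
  have hsingle : HasSum (fun j => ⟪y i, c j • x j⟫_𝕜) ⟪y i, c i • x i⟫_𝕜 :=
    hasSum_single i fun j hj => by rw [inner_smul_right, h i j, if_neg hj.symm, mul_zero]
  rw [hinner.unique hsingle, inner_smul_right, h i i, if_pos rfl, mul_one]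

variable {Φ : HilbertBasis ι 𝕜 E} {y : ι → H}

theorem inner_map {T : E →L[𝕜] H} (h : Biorthogonal 𝕜 y fun i => T (Φ i)) (i : ι) (e : E) :
    ⟪y i, T e⟫_𝕜 = ⟪Φ i, e⟫_𝕜 :=
  h.inner_eq_of_hasSum (hasSum_inner_hilbertBasis_smul_map Φ T e) i

theorem hasSum_inner_smul_map {T : E →L[𝕜] H} (h : Biorthogonal 𝕜 y fun i => T (Φ i)) (e : E) :
    HasSum (fun i => ⟪y i, T e⟫_𝕜 • T (Φ i)) (T e) := by
  simpa only [h.inner_map] using hasSum_inner_hilbertBasis_smul_map Φ T e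

variable [CompleteSpace E] [CompleteSpace H]

theorem adjoint_apply {T : E →L[𝕜] H} (h : Biorthogonal 𝕜 y fun i => T (Φ i)) (i : ι) :
    adjoint T (y i) = Φ i :=
  ext_inner_right 𝕜 fun e => by rw [adjoint_inner_left, h.inner_map]

theorem adjoint_symm_apply {X : E ≃L[𝕜] H} (h : Biorthogonal 𝕜 y fun i => X (Φ i)) (i : ι) :
    adjoint (X.symm : H →L[𝕜] E) (Φ i) = y i := by
  rw [← adjoint_apply (T := (X : E →L[𝕜] H)) h, adjoint_symm_adjoint_apply]

theorem hasSum_inner_map_smul {X : E ≃L[𝕜] H} (h : Biorthogonal 𝕜 y fun i => X (Φ i)) (f : H) :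
    HasSum (fun i => ⟪X (Φ i), f⟫_𝕜 • y i) f := by
  have hdual : Biorthogonal 𝕜 (fun i => X (Φ i)) fun i => adjoint (X.symm : H →L[𝕜] E) (Φ i) := by
    simpa only [h.adjoint_symm_apply] using h.symm
  simpa only [h.adjoint_symm_apply, adjoint_symm_adjoint_apply] using
    hdual.hasSum_inner_smul_map (adjoint (X : E →L[𝕜] H) f)

end Biorthogonal

theorem stmt_3_general (Φ : HilbertBasis ι 𝕜 E) (X : E ≃L[𝕜] H) (φ Ψ : ι → H)
    (hφ : ∀ i, φ i = X (Φ i)) (hbi : Biorthogonal 𝕜 φ Ψ) (f : H) :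
    HasSum (fun i => ⟪Ψ i, f⟫_𝕜 • φ i) f ∧ HasSum (fun i => ⟪φ i, f⟫_𝕜 • Ψ i) f := by
  obtain rfl : φ = fun i => X (Φ i) := funext hφ
  have : CompleteSpace E :=
    (completeSpace_congr (e := Φ.repr.toEquiv) Φ.repr.isometry.isUniformEmbedding).2 inferInstance
  have : CompleteSpace H := (completeSpace_congr (e := X.toEquiv) X.isUniformEmbedding).1 ‹_›
  constructor
  · simpa only [ContinuousLinearEquiv.coe_coe, X.apply_symm_apply] using
      hbi.symm.hasSum_inner_smul_map (T := (X : E →L[𝕜] H)) (X.symm f)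
  · exact hbi.symm.hasSum_inner_map_smul f

end Biorthogonal

theorem stmt_3 {H : Type*} [NormedAddCommGroup H] [InnerProductSpace ℂ H] [CompleteSpace H]
    (Φ : HilbertBasis ℕ ℂ H) (X Y : H ≃L[ℂ] H)
    (φ Ψ : ℕ → H) (hφ : ∀ n, φ n = X (Φ n)) (hΨ : ∀ n, Ψ n = Y (Φ n))
    (hbi : ∀ n m, ⟪φ n, Ψ m⟫_ℂ = if n = m then 1 else 0) (f : H) :
    HasSum (fun n : ℕ => ⟪Ψ n, f⟫_ℂ • φ n) f ∧
    HasSum (fun n : ℕ => ⟪φ n, f⟫_ℂ • Ψ n) f :=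
  stmt_3_general Φ X φ Ψ hφ hbi f
end

section
/- Let α ∈ ℂ, let w_a : ℝ → ℂ be differentiable with derivative W_a = w_a', set W_b(x) = 2x + α − W_a(x), and let b act on differentiable f : ℝ → ℂ by (b f)(x) = (1/√2)(−f'(x) + W_b(x)·f(x)). Then for every n ∈ ℕ and every x ∈ ℝ, the n-fold application of b to the function x ↦ exp(−w_a(x)) satisfies (bⁿ (exp(−w_a)))(x) = 2^{−n/2}·p_n(x)·exp(−w_a(x)), where (p_n) is the polynomial sequence associated with α. -/
/-! Conjugating `b` by `exp (-w)` turns its potential `W` into `W + w'`. For `w = w_a` and `W = W_b`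
the sum is the polynomial `2x + α`, whatever `w_a` is, and `b` with this polynomial potential acts
on `p_n` as the recurrence defining `p_{n+1}`, up to the factor `1/√2`. -/

/-- The polynomial sequence associated with `α`: `p₀ = 1`,
`p_{n+1}(x) = (2x + α) pₙ(x) - pₙ'(x)`. -/
noncomputable def pSeq (α : ℂ) : ℕ → Polynomial ℂ
  | 0 => 1
  | n + 1 => (2 * Polynomial.X + Polynomial.C α) * pSeq α n -
      Polynomial.derivative (pSeq α n)

/-- The creation-type operator `b = (1/√2)(-d/dx + W_b(x))`. -/
noncomputable def opB (Wb : ℝ → ℂ) (f : ℝ → ℂ) : ℝ → ℂ :=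
  fun x => (1 / ((Real.sqrt 2 : ℝ) : ℂ)) * (-deriv f x + Wb x * f x)

theorem opB_const_smul (W f : ℝ → ℂ) (c : ℂ) : opB W (c • f) = c • opB W f := by
  funext x
  simp only [opB, deriv_const_smul_field, Pi.smul_apply, smul_eq_mul]
  ring

theorem opB_mul_exp_neg (W : ℝ → ℂ) {g w : ℝ → ℂ} {x : ℝ}
    (hg : DifferentiableAt ℝ g x) (hw : DifferentiableAt ℝ w x) :
    opB W (fun t => g t * Complex.exp (-w t)) x =
      opB (W + deriv w) g x * Complex.exp (-w x) := by
  have hderiv : deriv (fun t => g t * Complex.exp (-w t)) x =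
      deriv g x * Complex.exp (-w x) + g x * (Complex.exp (-w x) * -deriv w x) :=
    (hg.hasDerivAt.mul hw.hasDerivAt.neg.cexp).deriv
  simp only [opB, hderiv, Pi.add_apply]
  ring

theorem opB_eval_eval (q p : Polynomial ℂ) :
    opB (fun x => q.eval (x : ℂ)) (fun x => p.eval (x : ℂ)) =
      (1 / ((Real.sqrt 2 : ℝ) : ℂ)) •
        fun x : ℝ => (q * p - p.derivative).eval (x : ℂ) := by
  funext x
  have hderiv : deriv (fun t : ℝ => p.eval (t : ℂ)) x = p.derivative.eval (x : ℂ) :=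
    (p.hasDerivAt (x : ℂ)).comp_ofReal.deriv
  simp only [opB, hderiv, Pi.smul_apply, smul_eq_mul, Polynomial.eval_sub, Polynomial.eval_mul]
  ring

theorem opB_eval_pSeq_mul_exp_neg {α : ℂ} {W w : ℝ → ℂ} (hw : Differentiable ℝ w)
    (hW : ∀ x : ℝ, W x = 2 * (x : ℂ) + α - deriv w x) (n : ℕ) :
    opB W (fun x => (pSeq α n).eval (x : ℂ) * Complex.exp (-w x)) =
      (1 / ((Real.sqrt 2 : ℝ) : ℂ)) •
        fun x : ℝ => (pSeq α (n + 1)).eval (x : ℂ) * Complex.exp (-w x) := by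
  have hpotential : W + deriv w =
      fun x : ℝ => (2 * Polynomial.X + Polynomial.C α).eval (x : ℂ) := by
    funext x
    simp [hW]
  funext x
  have hp : DifferentiableAt ℝ (fun t : ℝ => (pSeq α n).eval (t : ℂ)) x :=
    ((pSeq α n).hasDerivAt (x : ℂ)).comp_ofReal.differentiableAt
  rw [opB_mul_exp_neg W hp (hw x), hpotential, opB_eval_eval, ← pSeq]
  simp only [Pi.smul_apply, smul_eq_mul, mul_assoc]

theorem stmt_5 (α : ℂ) (wa : ℝ → ℂ) (hwa : Differentiable ℝ wa)
    (Wb : ℝ → ℂ) (hWb : ∀ x : ℝ, Wb x = 2 * (x : ℂ) + α - deriv wa x) :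
    ∀ (n : ℕ) (x : ℝ),
      (opB Wb)^[n] (fun t : ℝ => Complex.exp (-wa t)) x =
        (1 / ((Real.sqrt 2 : ℝ) : ℂ)) ^ n * (pSeq α n).eval (x : ℂ) *
          Complex.exp (-wa x) := by
  intro n
  suffices hiterate : (opB Wb)^[n] (fun t => Complex.exp (-wa t)) =
      (1 / ((Real.sqrt 2 : ℝ) : ℂ)) ^ n •
        fun x : ℝ => (pSeq α n).eval (x : ℂ) * Complex.exp (-wa x) by
    simpa only [Pi.smul_apply, smul_eq_mul, mul_assoc] using congrFun hiterate
  induction n with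
  | zero => simp [pSeq]
  | succ n ih =>
    rw [Function.iterate_succ_apply', ih, opB_const_smul, opB_eval_pSeq_mul_exp_neg hwa hWb,
      smul_smul, ← pow_succ]
end

section
/- Let α ∈ ℂ and let (p_n) be the polynomial sequence associated with α. Then for all n, m ∈ ℕ the function x ↦ p_n(x)·p_m(x)·exp(−(x² + αx)) is integrable on ℝ and ∫_ℝ p_n(x)·p_m(x)·exp(−(x² + αx)) dx = δ_{nm} · n! · 2ⁿ · √π · exp(α²/4); in particular the integral vanishes whenever n ≠ m. -/
open MeasureTheory

open Polynomial

/-!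
Integration by parts against the weight `w(x) = exp(-(x² + αx))` shows that the functional
`φ q = ∫ q w` satisfies `φ((2x + α) q) = φ(q')`, so the recursion for `pₙ` becomes
`φ(pₙ₊₁ q) = φ(pₙ q')`, and therefore `φ(pₙ q) = φ(q⁽ⁿ⁾)`. If `q` has degree at most `n`, then
`q⁽ⁿ⁾` is the constant `n!` times the `n`-th coefficient of `q`. Since `pₙ` has degree `n` and
leading coefficient `2ⁿ`, this gives both orthogonality and the norms, up to the Gaussian
integral `φ 1`.
-/

theorem iterate_derivative_eq_C_of_natDegree_le {R : Type*} [Semiring R] {q : R[X]} {n : ℕ}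
    (hq : q.natDegree ≤ n) : derivative^[n] q = C (n.factorial • q.coeff n) := by
  have hdeg : (derivative^[n] q).natDegree ≤ 0 :=
    (natDegree_iterate_derivative q n).trans (Nat.sub_eq_zero_of_le hq).le
  rw [eq_C_of_natDegree_le_zero hdeg, coeff_iterate_derivative, zero_add, Nat.descFactorial_self]

theorem natDegree_pSeq_le (α : ℂ) (n : ℕ) : (pSeq α n).natDegree ≤ n := by
  induction n with
  | zero => simp [pSeq]
  | succ n ih =>
    have hlin : (2 * X + C α : ℂ[X]).natDegree ≤ 1 := by compute_degree
    have hmul : ((2 * X + C α) * pSeq α n).natDegree ≤ n + 1 :=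
      (natDegree_mul_le_of_le hlin ih).trans (add_comm 1 n).le
    have hder : (derivative (pSeq α n)).natDegree ≤ n + 1 :=
      (natDegree_derivative_le _).trans (by lia)
    exact natDegree_sub_le_of_le hmul hder |>.trans (max_self _).le

theorem coeff_pSeq_self (α : ℂ) (n : ℕ) : (pSeq α n).coeff n = 2 ^ n := by
  induction n with
  | zero => simp [pSeq]
  | succ n ih =>
    have hvanish {k : ℕ} (hk : n < k) : (pSeq α n).coeff k = 0 :=
      coeff_eq_zero_of_natDegree_lt ((natDegree_pSeq_le α n).trans_lt hk)
    rw [pSeq, coeff_sub, coeff_derivative, add_mul, coeff_add, mul_assoc, coeff_ofNat_mul,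
      coeff_X_mul, coeff_C_mul, ih, hvanish (by lia), hvanish (by lia)]
    ring

section Functional

variable {M : Type*} [AddCommGroup M] [Module ℂ M] {α : ℂ} {φ : ℂ[X] →ₗ[ℂ] M}

theorem map_pSeq_mul (hφ : ∀ q, φ ((2 * X + C α) * q) = φ (derivative q)) (n : ℕ) (q : ℂ[X]) :
    φ (pSeq α n * q) = φ (derivative^[n] q) := by
  induction n generalizing q with
  | zero => simp [pSeq]
  | succ n ih =>
    have hrec : pSeq α (n + 1) * q =
        (2 * X + C α) * (pSeq α n * q) - derivative (pSeq α n) * q := by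
      rw [pSeq]
      ring
    calc φ (pSeq α (n + 1) * q)
        = φ (derivative (pSeq α n * q)) - φ (derivative (pSeq α n) * q) := by
          rw [hrec, map_sub, hφ]
      _ = φ (pSeq α n * derivative q) := by
          rw [derivative_mul, map_add, add_sub_cancel_left]
      _ = φ (derivative^[n + 1] q) := by
          rw [ih, Function.iterate_succ_apply]

theorem map_pSeq_mul_of_natDegree_le (hφ : ∀ q, φ ((2 * X + C α) * q) = φ (derivative q))
    {n : ℕ} {q : ℂ[X]} (hq : q.natDegree ≤ n) :
    φ (pSeq α n * q) = (n.factorial * q.coeff n) • φ 1 := by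
  rw [map_pSeq_mul hφ, iterate_derivative_eq_C_of_natDegree_le hq, nsmul_eq_mul,
    ← algebraMap_eq, Algebra.algebraMap_eq_smul_one, map_smul]

theorem map_pSeq_mul_pSeq_of_lt (hφ : ∀ q, φ ((2 * X + C α) * q) = φ (derivative q))
    {m n : ℕ} (hmn : m < n) : φ (pSeq α n * pSeq α m) = 0 := by
  have hdeg : (pSeq α m).natDegree < n := (natDegree_pSeq_le α m).trans_lt hmn
  rw [map_pSeq_mul_of_natDegree_le hφ hdeg.le, coeff_eq_zero_of_natDegree_lt hdeg, mul_zero,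
    zero_smul]

theorem map_pSeq_mul_pSeq (hφ : ∀ q, φ ((2 * X + C α) * q) = φ (derivative q)) (n m : ℕ) :
    φ (pSeq α n * pSeq α m) = if n = m then ((n.factorial : ℂ) * 2 ^ n) • φ 1 else 0 := by
  rcases lt_trichotomy n m with hlt | rfl | hgt
  · rw [mul_comm, map_pSeq_mul_pSeq_of_lt hφ hlt, if_neg hlt.ne]
  · rw [map_pSeq_mul_of_natDegree_le hφ (natDegree_pSeq_le α n), coeff_pSeq_self, if_pos rfl]
  · rw [map_pSeq_mul_pSeq_of_lt hφ hgt, if_neg hgt.ne']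

end Functional

theorem abs_pow_le_factorial_mul_exp_add_exp_neg (x : ℝ) (k : ℕ) :
    |x| ^ k ≤ k.factorial * (Real.exp x + Real.exp (-x)) :=
  calc |x| ^ k ≤ k.factorial * Real.exp |x| :=
        (div_le_iff₀' (by positivity)).mp (Real.pow_div_factorial_le_exp |x| (abs_nonneg x) k)
    _ ≤ k.factorial * (Real.exp x + Real.exp (-x)) := by
        gcongr
        exact Real.exp_abs_le x

theorem integrable_pow_smul_of_integrable_exp_smul {E : Type*} [NormedAddCommGroup E]
    [NormedSpace ℝ E] {μ : Measure ℝ} {f : ℝ → E}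
    (hpos : Integrable (fun x => Real.exp x • f x) μ)
    (hneg : Integrable (fun x => Real.exp (-x) • f x) μ) (k : ℕ) :
    Integrable (fun x => x ^ k • f x) μ := by
  have hf : AEStronglyMeasurable f μ := by
    have hcancel : f = fun x => Real.exp (-x) • Real.exp x • f x := by
      ext x
      rw [smul_smul, ← Real.exp_add, neg_add_cancel, Real.exp_zero, one_smul]
    rw [hcancel]
    exact (by fun_prop : Continuous fun x : ℝ => Real.exp (-x)).aestronglyMeasurable.smul hpos.1
  refine ((hpos.norm.add hneg.norm).const_mul (k.factorial : ℝ)).mono'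
    ((continuous_pow k).aestronglyMeasurable.smul hf) (.of_forall fun x => ?_)
  simp only [Pi.add_apply, norm_smul, norm_pow, Real.norm_eq_abs, Real.abs_exp]
  rw [← add_mul, ← mul_assoc]
  gcongr
  exact abs_pow_le_factorial_mul_exp_add_exp_neg x k

theorem integrable_eval_mul_of_integrable_exp_smul {μ : Measure ℝ} {f : ℝ → ℂ}
    (hpos : Integrable (fun x => Real.exp x • f x) μ)
    (hneg : Integrable (fun x => Real.exp (-x) • f x) μ) (q : ℂ[X]) :
    Integrable (fun x : ℝ => q.eval (x : ℂ) * f x) μ := by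
  induction q using Polynomial.induction_on' with
  | add p q hp hq => simpa only [eval_add, add_mul] using! hp.add hq
  | monomial k a =>
    simpa only [eval_monomial, mul_assoc, Complex.real_smul, Complex.ofReal_pow] using
      (integrable_pow_smul_of_integrable_exp_smul hpos hneg k).const_mul a

theorem integrable_eval_mul_cexp_quadratic {b : ℂ} (hb : b.re < 0) (c d : ℂ) (q : ℂ[X]) :
    Integrable fun x : ℝ => q.eval (x : ℂ) * Complex.exp (b * x ^ 2 + c * x + d) := by
  have htilt (s : ℝ) :
      Integrable fun x : ℝ => Real.exp (s * x) • Complex.exp (b * x ^ 2 + c * x + d) := by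
    convert integrable_cexp_quadratic' hb (c + s) d using 2 with x
    rw [Complex.real_smul, Complex.ofReal_exp, ← Complex.exp_add]
    push_cast
    ring_nf
  exact integrable_eval_mul_of_integrable_exp_smul (by simpa using htilt 1)
    (by simpa using htilt (-1)) q

theorem integral_eval_derivative_add_mul_cexp_quadratic {b : ℂ} (hb : b.re < 0) (c d : ℂ)
    (q : ℂ[X]) :
    ∫ x : ℝ, (derivative q + (C (2 * b) * X + C c) * q).eval (x : ℂ) *
      Complex.exp (b * x ^ 2 + c * x + d) = 0 := by
  refine integral_eq_zero_of_hasDerivAt_of_integrable (fun x => ?_)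
    (integrable_eval_mul_cexp_quadratic hb c d _) (integrable_eval_mul_cexp_quadratic hb c d q)
  have hexponent : HasDerivAt (fun z : ℂ => b * z ^ 2 + c * z + d) (2 * b * x + c) x := by
    convert! ((((hasDerivAt_id (x : ℂ)).pow 2).const_mul b).add
      ((hasDerivAt_id (x : ℂ)).const_mul c)).add_const d using 1
    simp only [Nat.cast_ofNat, id_eq, Nat.add_one_sub_one, pow_one, mul_one, add_left_inj]
    ring
  convert! ((q.hasDerivAt (x : ℂ)).mul hexponent.cexp).comp_ofReal using 1
  simp only [eval_add, eval_mul, eval_C, eval_X]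
  ring

theorem neg_sq_add_mul_eq_quadratic {R : Type*} [CommRing R] (α z : R) :
    -(z ^ 2 + α * z) = -1 * z ^ 2 + -α * z + 0 := by
  ring

theorem integrable_eval_mul_cexp_neg_sq_add_mul (α : ℂ) (q : ℂ[X]) :
    Integrable fun x : ℝ => q.eval (x : ℂ) * Complex.exp (-((x : ℂ) ^ 2 + α * x)) := by
  simp only [neg_sq_add_mul_eq_quadratic]
  exact integrable_eval_mul_cexp_quadratic (by simp) (-α) 0 q

/-- The moment functional `q ↦ ∫ q(x) exp(-(x² + αx)) dx` of the complex Gaussian weight for which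
the polynomials `pSeq α` are orthogonal. The pairing is bilinear, without complex conjugation. -/
noncomputable def gaussianFunctional (α : ℂ) : ℂ[X] →ₗ[ℂ] ℂ where
  toFun q := ∫ x : ℝ, q.eval (x : ℂ) * Complex.exp (-((x : ℂ) ^ 2 + α * x))
  map_add' p q := by
    simp only [eval_add, add_mul]
    exact integral_add (integrable_eval_mul_cexp_neg_sq_add_mul α p)
      (integrable_eval_mul_cexp_neg_sq_add_mul α q)
  map_smul' a q := by
    simp only [eval_smul, smul_eq_mul, mul_assoc, integral_const_mul, RingHom.id_apply]

theorem gaussianFunctional_apply (α : ℂ) (q : ℂ[X]) :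
    gaussianFunctional α q =
      ∫ x : ℝ, q.eval (x : ℂ) * Complex.exp (-((x : ℂ) ^ 2 + α * x)) :=
  rfl

theorem gaussianFunctional_two_mul_X_add_C_mul (α : ℂ) (q : ℂ[X]) :
    gaussianFunctional α ((2 * X + C α) * q) = gaussianFunctional α (derivative q) := by
  have hparts :
      gaussianFunctional α (derivative q + (C (2 * -1) * X + C (-α)) * q) = 0 := by
    simp only [gaussianFunctional_apply, neg_sq_add_mul_eq_quadratic]
    exact integral_eval_derivative_add_mul_cexp_quadratic (by simp) (-α) 0 q
  have hpoly : derivative q + (C (2 * -1) * X + C (-α)) * q =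
      derivative q - (2 * X + C α) * q := by
    simp only [C_neg, C_mul, C_1, C_ofNat]
    ring
  rw [hpoly, map_sub, sub_eq_zero] at hparts
  exact hparts.symm

theorem gaussianFunctional_one (α : ℂ) :
    gaussianFunctional α 1 = ((Real.sqrt Real.pi : ℝ) : ℂ) * Complex.exp (α ^ 2 / 4) := by
  have hsqrt : ((Real.sqrt Real.pi : ℝ) : ℂ) = (Real.pi / -(-1) : ℂ) ^ (1 / 2 : ℂ) := by
    rw [Real.sqrt_eq_rpow, Complex.ofReal_cpow Real.pi_pos.le]
    norm_num
  have hexp : α ^ 2 / 4 = 0 - (-α) ^ 2 / (4 * -1) := by ring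
  simp only [gaussianFunctional_apply, eval_one, one_mul, neg_sq_add_mul_eq_quadratic]
  rw [hsqrt, hexp]
  exact integral_cexp_quadratic (by simp) (-α) 0

theorem stmt_8 (α : ℂ) (n m : ℕ) :
    Integrable (fun x : ℝ =>
      (pSeq α n).eval (x : ℂ) * (pSeq α m).eval (x : ℂ) *
        Complex.exp (-((x : ℂ) ^ 2 + α * x))) (volume : Measure ℝ) ∧
    ∫ x : ℝ, (pSeq α n).eval (x : ℂ) * (pSeq α m).eval (x : ℂ) *
        Complex.exp (-((x : ℂ) ^ 2 + α * x)) =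
      (if n = m then 1 else 0) * (n.factorial : ℂ) * 2 ^ n *
        ((Real.sqrt Real.pi : ℝ) : ℂ) * Complex.exp (α ^ 2 / 4) := by
  simp only [← eval_mul]
  refine ⟨integrable_eval_mul_cexp_neg_sq_add_mul α _, ?_⟩
  rw [← gaussianFunctional_apply,
    map_pSeq_mul_pSeq (gaussianFunctional_two_mul_X_add_C_mul α), gaussianFunctional_one]
  split_ifs <;> simp [mul_assoc]
end

section
/- For all f, g ∈ L²(ℝ, ℂ), the function z ↦ ⟨f, η(·;z)⟩·⟨η(·;z), g⟩ is integrable over ℂ and (1/π)·∫_ℂ ⟨f, η(·;z)⟩·⟨η(·;z), g⟩ dz = ⟨f, g⟩; that is, the standard coherent states resolve the identity weakly. -/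
open MeasureTheory
open scoped ComplexConjugate

/-- The coherent-state wavefunction
`η(x;z) = π^{-1/4} exp(-x²/2 + √2 z x - (Re z)²)`. -/
noncomputable def eta (z : ℂ) : ℝ → ℂ := fun x =>
  ((Real.pi ^ (-(1 / 4 : ℝ)) : ℝ) : ℂ) *
    Complex.exp (-(x : ℂ) ^ 2 / 2 + ((Real.sqrt 2 : ℝ) : ℂ) * z * x - (z.re : ℂ) ^ 2)

/-!
A coherent-state coefficient `⟨η(·;z), g⟩` is a value of the short-time Fourier transform of `g`
with window `η(·;0)`, and `z ↦ (position, frequency)` multiplies area by `1/π`. The theorem is thus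
the orthogonality relation of the short-time Fourier transform for a window of norm one. That
relation is Plancherel's theorem in the frequency variable for each position of the window, followed
by Fubini's theorem, which turns the integral over the positions into the norm of the window.

For an `L²` window the windowed function lies in `L²` only for almost every position, which is all
that Fubini's theorem requires.
-/

open scoped ComplexInnerProductSpace FourierTransform

theorem integrable_inner_of_memLp_two {α 𝕜 E : Type*} [MeasurableSpace α] {μ : Measure α}
    [RCLike 𝕜] [NormedAddCommGroup E] [InnerProductSpace 𝕜 E] {f g : α → E}
    (hf : MemLp f 2 μ) (hg : MemLp g 2 μ) : Integrable (fun x => inner 𝕜 (f x) (g x)) μ :=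
  (L2.integrable_inner (𝕜 := 𝕜) (hf.toLp f) (hg.toLp g)).congr <| by
    filter_upwards [hf.coeFn_toLp, hg.coeFn_toLp] with x hfx hgx
    rw [hfx, hgx]

section Translation

variable {G 𝕜 : Type*} [AddCommGroup G] [MeasurableSpace G] [MeasurableAdd₂ G] [MeasurableNeg G]
  {μ : Measure G} [SFinite μ] [μ.IsAddLeftInvariant] [μ.IsNegInvariant] [RCLike 𝕜] {u v : G → 𝕜}

theorem integrable_comp_sub_mul (hu : Integrable u μ) (hv : Integrable v μ) :
    Integrable (fun q : G × G => u (q.2 - q.1) * v q.2) (μ.prod μ) := by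
  simpa [mul_comm] using hv.convolution_integrand (ContinuousLinearMap.mul 𝕜 𝕜) hu.comp_neg

theorem integral_integral_comp_sub_mul (hu : Integrable u μ) (hv : Integrable v μ) :
    ∫ p, ∫ x, u (x - p) * v x ∂μ ∂μ = (∫ x, u x ∂μ) * ∫ x, v x ∂μ := by
  rw [integral_integral_swap (integrable_comp_sub_mul hu hv)]
  simp_rw [integral_mul_const, integral_sub_left_eq_self u μ, integral_const_mul]

end Translation

variable {V : Type*} [NormedAddCommGroup V] [InnerProductSpace ℝ V] [FiniteDimensional ℝ V]
  [MeasurableSpace V] [BorelSpace V]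

section FourierL1

variable {F : Type*} [NormedAddCommGroup F] [NormedSpace ℂ F] {h : V → F}

theorem continuous_fourier_of_integrable (hh : Integrable h) : Continuous (𝓕 h) :=
  VectorFourier.fourierIntegral_continuous Real.continuous_fourierChar (L := innerₗ V)
    continuous_inner hh

theorem integral_fourier_smul_eq [CompleteSpace F] {ψ : V → ℂ} (hψ : Integrable ψ)
    (hh : Integrable h) :
    ∫ x, 𝓕 ψ x • h x = ∫ ξ, ψ ξ • 𝓕 h ξ := by
  simpa using! VectorFourier.integral_fourierIntegral_smul_eq_flip (L := innerₗ V)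
    Real.continuous_fourierChar continuous_inner hψ hh

end FourierL1

variable {H : Type*} [NormedAddCommGroup H] [InnerProductSpace ℂ H]

section Plancherel

variable [CompleteSpace H] {h k : V → H}

theorem fourier_ae_eq_fourier_toLp (h₁ : Integrable h) (h₂ : MemLp h 2) :
    𝓕 h =ᵐ[volume] (𝓕 (h₂.toLp h) : Lp H 2 (volume : Measure V)) := by
  refine ae_eq_of_integral_contDiff_smul_eq (continuous_fourier_of_integrable h₁).locallyIntegrable
    ((Lp.memLp _).locallyIntegrable one_le_two) fun θ hθ hθc => ?_
  have hsupp : HasCompactSupport (Complex.ofRealCLM ∘ θ) := hθc.comp_left rfl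
  have hsmooth : ContDiff ℝ (⊤ : ℕ∞) (Complex.ofRealCLM ∘ θ) := by fun_prop
  let ψ := hsupp.toSchwartzMap hsmooth
  have hψ : ∀ x, ψ x = (θ x : ℂ) := fun x => by simp [ψ]
  calc ∫ ξ, θ ξ • 𝓕 h ξ = ∫ ξ, ψ ξ • 𝓕 h ξ := by simp only [hψ, Complex.coe_smul]
    _ = ∫ x, (𝓕 ψ) x • h x := by
        rw [← integral_fourier_smul_eq ψ.integrable h₁, SchwartzMap.fourier_coe]
    _ = ∫ x, (𝓕 ψ) x • h₂.toLp h x := by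
        refine integral_congr_ae ?_
        filter_upwards [h₂.coeFn_toLp] with x hx
        rw [hx]
    _ = ∫ ξ, ψ ξ • (𝓕 (h₂.toLp h) : Lp H 2 (volume : Measure V)) ξ := by
        rw [← Lp.toTemperedDistribution_apply, ← Lp.toTemperedDistribution_apply,
          ← Lp.fourier_toTemperedDistribution_eq, TemperedDistribution.fourier_apply]
    _ = ∫ ξ, θ ξ • (𝓕 (h₂.toLp h) : Lp H 2 (volume : Measure V)) ξ := by
        simp only [hψ, Complex.coe_smul]

theorem memLp_two_fourier (h₁ : Integrable h) (h₂ : MemLp h 2) : MemLp (𝓕 h) 2 :=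
  (memLp_congr_ae (fourier_ae_eq_fourier_toLp h₁ h₂)).2 (Lp.memLp _)

theorem integral_inner_fourier_fourier (h₁ : Integrable h) (h₂ : MemLp h 2)
    (k₁ : Integrable k) (k₂ : MemLp k 2) : ∫ ξ, ⟪𝓕 h ξ, 𝓕 k ξ⟫ = ∫ x, ⟪h x, k x⟫ := by
  calc ∫ ξ, ⟪𝓕 h ξ, 𝓕 k ξ⟫
      = ⟪(𝓕 (h₂.toLp h) : Lp H 2 (volume : Measure V)), 𝓕 (k₂.toLp k)⟫ := by
        rw [L2.inner_def]
        refine integral_congr_ae ?_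
        filter_upwards [fourier_ae_eq_fourier_toLp h₁ h₂, fourier_ae_eq_fourier_toLp k₁ k₂]
          with ξ hξ kξ
        rw [hξ, kξ]
    _ = ⟪h₂.toLp h, k₂.toLp k⟫ := Lp.inner_fourier_eq _ _
    _ = ∫ x, ⟪h x, k x⟫ := by
        rw [L2.inner_def]
        refine integral_congr_ae ?_
        filter_upwards [h₂.coeFn_toLp, k₂.coeFn_toLp] with x hx kx
        rw [hx, kx]

theorem integral_norm_sq_fourier (h₁ : Integrable h) (h₂ : MemLp h 2) :
    ∫ ξ, ‖𝓕 h ξ‖ ^ 2 = ∫ x, ‖h x‖ ^ 2 := by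
  have key := integral_inner_fourier_fourier h₁ h₂ h₁ h₂
  simp_rw [inner_self_eq_norm_sq_to_K, Complex.coe_algebraMap] at key
  exact_mod_cast key

end Plancherel

section Windowed

variable {G : Type*} [AddGroup G]

/-- The function `f` seen through the window `φ` translated to the position `p`. The window is
conjugated, as in the analysis coefficient `⟨φ(· - p), f⟩`. -/
def windowed (φ : G → ℂ) (f : G → H) (p : G) : G → H :=
  fun x => conj (φ (x - p)) • f x

theorem inner_windowed_windowed (φ ψ : G → ℂ) (f g : G → H) (p x : G) :
    ⟪windowed φ f p x, windowed ψ g p x⟫ = ⟪ψ (x - p), φ (x - p)⟫ * ⟪f x, g x⟫ := by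
  simp only [windowed, inner_smul_left, inner_smul_right, RCLike.inner_apply, Complex.conj_conj]
  ring

end Windowed

section ShortTimeFourier

/-- The short-time Fourier transform of `f` with window `φ`, as a function of a pair
(position, frequency). Frequencies are normalized as in `𝓕`, with characters
`x ↦ exp (2πi⟪x, ξ⟫)`. -/
noncomputable def stft (φ : V → ℂ) (f : V → H) (q : V × V) : H :=
  𝓕 (windowed φ f q.1) q.2

variable {φ ψ : V → ℂ} {f g : V → H}

theorem integrable_windowed (hφ : MemLp φ 2) (hf : MemLp f 2) (p : V) :
    Integrable (windowed φ f p) :=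
  memLp_one_iff_integrable.1 <|
    hf.smul (hφ.comp_measurePreserving (measurePreserving_sub_right volume p)).star

theorem integrable_norm_sq_windowed (hφ : MemLp φ 2) (hf : MemLp f 2) :
    Integrable fun q : V × V => ‖windowed φ f q.1 q.2‖ ^ 2 := by
  simp_rw [windowed, norm_smul, RCLike.norm_conj, mul_pow]
  exact integrable_comp_sub_mul ((memLp_two_iff_integrable_sq_norm hφ.1).1 hφ)
    ((memLp_two_iff_integrable_sq_norm hf.1).1 hf)

theorem ae_memLp_windowed (hφ : MemLp φ 2) (hf : MemLp f 2) :
    ∀ᵐ p, MemLp (windowed φ f p) 2 := by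
  filter_upwards [(integrable_norm_sq_windowed hφ hf).prod_right_ae] with p hp
  exact (memLp_two_iff_integrable_sq_norm (integrable_windowed hφ hf p).aestronglyMeasurable).2 hp

theorem aestronglyMeasurable_stft (hφ : AEStronglyMeasurable φ) (hf : AEStronglyMeasurable f) :
    AEStronglyMeasurable (stft φ f) := by
  have hsub : Measure.QuasiMeasurePreserving fun w : (V × V) × V => w.2 - w.1.1 :=
    QuasiMeasurePreserving.prod_of_right (by fun_prop) <| .of_forall fun q =>
      (measurePreserving_sub_right volume q.1).quasiMeasurePreserving
  have hchar : Continuous fun w : (V × V) × V => Real.fourierChar (-(innerₗ V w.2 w.1.2)) :=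
    Real.continuous_fourierChar.comp (by simp only [innerₗ_apply_apply]; fun_prop)
  exact (hchar.aestronglyMeasurable.smul <|
    (hφ.comp_quasiMeasurePreserving hsub).star.smul hf.comp_snd).integral_prod_right'

variable [CompleteSpace H]

theorem memLp_two_stft (hφ : MemLp φ 2) (hf : MemLp f 2) : MemLp (stft φ f) 2 := by
  have hm := aestronglyMeasurable_stft hφ.1 hf.1
  have hm_sq : AEStronglyMeasurable fun q => ‖stft φ f q‖ ^ 2 := hm.norm.pow 2
  refine (memLp_two_iff_integrable_sq_norm hm).2 ((integrable_prod_iff hm_sq).2 ⟨?_, ?_⟩)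
  · filter_upwards [ae_memLp_windowed hφ hf] with p hp
    have hfourier := memLp_two_fourier (integrable_windowed hφ hf p) hp
    exact (memLp_two_iff_integrable_sq_norm hfourier.1).1 hfourier
  · refine (integrable_norm_sq_windowed hφ hf).integral_prod_left.congr ?_
    filter_upwards [ae_memLp_windowed hφ hf] with p hp
    simp_rw [norm_pow, norm_norm]
    exact (integral_norm_sq_fourier (integrable_windowed hφ hf p) hp).symm

theorem integrable_inner_stft (hφ : MemLp φ 2) (hψ : MemLp ψ 2) (hf : MemLp f 2)
    (hg : MemLp g 2) : Integrable fun q => ⟪stft φ f q, stft ψ g q⟫ :=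
  integrable_inner_of_memLp_two (memLp_two_stft hφ hf) (memLp_two_stft hψ hg)

theorem ae_integral_inner_stft_stft_frequency (hφ : MemLp φ 2) (hψ : MemLp ψ 2)
    (hf : MemLp f 2) (hg : MemLp g 2) :
    ∀ᵐ p, ∫ ξ, ⟪stft φ f (p, ξ), stft ψ g (p, ξ)⟫ =
      ∫ x, ⟪ψ (x - p), φ (x - p)⟫ * ⟪f x, g x⟫ := by
  filter_upwards [ae_memLp_windowed hφ hf, ae_memLp_windowed hψ hg] with p hfp hgp
  simp_rw [← inner_windowed_windowed]
  exact integral_inner_fourier_fourier (integrable_windowed hφ hf p) hfp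
    (integrable_windowed hψ hg p) hgp

/-- **Orthogonality relation** (Moyal's identity) for the short-time Fourier transform. -/
theorem integral_inner_stft_stft (hφ : MemLp φ 2) (hψ : MemLp ψ 2) (hf : MemLp f 2)
    (hg : MemLp g 2) :
    ∫ q, ⟪stft φ f q, stft ψ g q⟫ = (∫ x, ⟪ψ x, φ x⟫) * ∫ x, ⟪f x, g x⟫ := by
  rw [Measure.volume_eq_prod, integral_prod _ (integrable_inner_stft hφ hψ hf hg),
    integral_congr_ae (ae_integral_inner_stft_stft_frequency hφ hψ hf hg)]
  exact integral_integral_comp_sub_mul (integrable_inner_of_memLp_two hψ hφ)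
    (integrable_inner_of_memLp_two hf hg)

end ShortTimeFourier

section CoherentStates

theorem continuous_eta (z : ℂ) : Continuous (eta z) := by
  unfold eta
  fun_prop

theorem norm_eta_sq (z : ℂ) (x : ℝ) :
    ‖eta z x‖ ^ 2 = (√Real.pi)⁻¹ * Real.exp (-1 * (x - √2 * z.re) ^ 2) := by
  have hpi : (Real.pi ^ (-(1 / 4 : ℝ))) ^ 2 = (√Real.pi)⁻¹ := by
    rw [← Real.rpow_natCast, ← Real.rpow_mul Real.pi_pos.le, Real.sqrt_eq_rpow,
      ← Real.rpow_neg Real.pi_pos.le]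
    norm_num
  have hsqrt : √2 ^ 2 = 2 := Real.sq_sqrt zero_le_two
  rw [eta, norm_mul, mul_pow, Complex.norm_real, Real.norm_eq_abs, sq_abs, hpi, Complex.norm_exp,
    ← Real.exp_nat_mul]
  congr 2
  simp only [Nat.cast_ofNat, ← Complex.ofReal_pow, Complex.sub_re, Complex.add_re,
    Complex.div_ofNat_re, Complex.neg_re, Complex.ofReal_re, Complex.mul_re, Complex.ofReal_im,
    zero_mul, sub_zero, Complex.mul_im, add_zero, mul_zero, neg_mul, one_mul]
  linear_combination z.re ^ 2 * hsqrt

theorem memLp_two_eta (z : ℂ) : MemLp (eta z) 2 := by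
  rw [memLp_two_iff_integrable_sq_norm (continuous_eta z).aestronglyMeasurable]
  simp_rw [norm_eta_sq]
  exact ((integrable_exp_neg_mul_sq one_pos).comp_sub_right (√2 * z.re)).const_mul _

theorem integral_norm_eta_sq (z : ℂ) : ∫ x, ‖eta z x‖ ^ 2 = 1 := by
  simp_rw [norm_eta_sq]
  rw [integral_const_mul, integral_sub_right_eq_self fun x => Real.exp (-1 * x ^ 2),
    integral_gaussian, div_one, inv_mul_cancel₀ (Real.sqrt_ne_zero'.2 Real.pi_pos)]

theorem integral_inner_eta_self (z : ℂ) : ∫ x, ⟪eta z x, eta z x⟫ = 1 := by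
  simp_rw [inner_self_eq_norm_sq_to_K, Complex.coe_algebraMap, ← Complex.ofReal_pow]
  rw [integral_complex_ofReal, integral_norm_eta_sq, Complex.ofReal_one]

/-- The pair (position, frequency) at which the short-time Fourier transform with window `eta 0`
gives the coefficients of `eta z`. The factor `2π` converts to the frequencies of `𝓕`. -/
noncomputable def phasePoint (z : ℂ) : ℝ × ℝ := (√2 * z.re, √2 / (2 * Real.pi) * z.im)

theorem conj_eta_eq (z : ℂ) (x : ℝ) :
    conj (eta z x) = Real.fourierChar (-(inner ℝ x (phasePoint z).2)) *
      conj (eta 0 (x - (phasePoint z).1)) := by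
  have hsqrt : ((√2 : ℝ) : ℂ) ^ 2 = 2 := by
    rw [← Complex.ofReal_pow, Real.sq_sqrt zero_le_two, Complex.ofReal_ofNat]
  have hpi : (Real.pi : ℂ) ≠ 0 := Complex.ofReal_ne_zero.2 Real.pi_ne_zero
  obtain ⟨p, q⟩ := z
  simp only [eta, phasePoint, Real.fourierChar_apply, map_mul, Complex.conj_ofReal,
    ← Complex.exp_conj]
  rw [mul_left_comm, ← Complex.exp_add, Complex.mk_eq_add_mul_I]
  congr 2
  simp only [map_sub, map_add, map_div₀, map_neg, map_pow, Complex.conj_ofReal, Complex.conj_ofNat,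
    map_mul, Complex.conj_I, mul_neg, RCLike.inner_apply, Real.ringHom_apply, Complex.ofReal_neg,
    Complex.ofReal_mul, Complex.ofReal_ofNat, Complex.ofReal_div, neg_mul, Complex.ofReal_sub,
    mul_zero, zero_mul, add_zero, Complex.zero_re, Complex.ofReal_zero, ne_eq,
    OfNat.ofNat_ne_zero, not_false_eq_true, zero_pow, sub_zero]
  field_simp
  linear_combination ((p : ℂ) ^ 2) * hsqrt

theorem integral_conj_eta_mul (g : ℝ → ℂ) (z : ℂ) :
    ∫ x, conj (eta z x) * g x = stft (eta 0) g (phasePoint z) := by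
  simp_rw [stft, Real.fourier_eq, windowed, conj_eta_eq z, Circle.smul_def, smul_eq_mul, mul_assoc]

theorem map_prodMap_mul_left_volume {a b : ℝ} (ha : a ≠ 0) (hb : b ≠ 0) :
    Measure.map (Prod.map (a * ·) (b * ·)) volume =
      ENNReal.ofReal |(a * b)⁻¹| • (volume : Measure (ℝ × ℝ)) := by
  rw [Measure.volume_eq_prod, ← Measure.map_prod_map _ _ (measurable_const_mul a)
    (measurable_const_mul b), Real.map_volume_mul_left ha, Real.map_volume_mul_left hb,
    Measure.prod_smul_left, Measure.prod_smul_right, smul_smul, ← ENNReal.ofReal_mul (abs_nonneg _),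
    ← abs_mul, mul_inv]

theorem measurableEmbedding_phasePoint : MeasurableEmbedding phasePoint :=
  ((measurableEmbedding_mulLeft₀ (by positivity : √2 ≠ 0)).prodMap
    (measurableEmbedding_mulLeft₀ (by positivity : √2 / (2 * Real.pi) ≠ 0))).comp
    Complex.measurableEquivRealProd.measurableEmbedding

theorem measurePreserving_phasePoint :
    MeasurePreserving phasePoint volume (ENNReal.ofReal Real.pi • volume) := by
  have hscale : MeasurePreserving (Prod.map (√2 * ·) (√2 / (2 * Real.pi) * ·))
      (volume : Measure (ℝ × ℝ)) (ENNReal.ofReal Real.pi • volume) := by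
    refine ⟨by fun_prop, ?_⟩
    rw [map_prodMap_mul_left_volume (by positivity) (by positivity), abs_of_pos (by positivity)]
    congr 2
    have hsqrt : √2 ^ 2 = 2 := Real.sq_sqrt zero_le_two
    field_simp
    linarith
  exact hscale.comp Complex.volume_preserving_equiv_real_prod

end CoherentStates

theorem stmt_11 (f g : Lp ℂ 2 (volume : Measure ℝ)) :
    Integrable (fun z : ℂ =>
      (∫ x : ℝ, conj (f x) * eta z x) * (∫ x : ℝ, conj (eta z x) * g x))
      (volume : Measure ℂ) ∧
    ((1 / Real.pi : ℝ) : ℂ) *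
        ∫ z : ℂ, (∫ x : ℝ, conj (f x) * eta z x) * (∫ x : ℝ, conj (eta z x) * g x) =
      ∫ x : ℝ, conj (f x) * g x := by
  have hcoeff (z : ℂ) : (∫ x, conj (f x) * eta z x) * (∫ x, conj (eta z x) * g x) =
      ⟪stft (eta 0) f (phasePoint z), stft (eta 0) g (phasePoint z)⟫ := by
    rw [← integral_conj_eta_mul, ← integral_conj_eta_mul, RCLike.inner_apply', ← integral_conj]
    simp only [map_mul, Complex.conj_conj, mul_comm]
  have hη := memLp_two_eta 0
  simp_rw [hcoeff]
  constructor
  · exact (measurePreserving_phasePoint.integrable_comp_emb measurableEmbedding_phasePoint).2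
      ((integrable_inner_stft hη hη (Lp.memLp f) (Lp.memLp g)).smul_measure ENNReal.ofReal_ne_top)
  · rw [measurePreserving_phasePoint.integral_comp measurableEmbedding_phasePoint
      fun q => ⟪stft (eta 0) f q, stft (eta 0) g q⟫, integral_smul_measure,
      integral_inner_stft_stft hη hη (Lp.memLp f) (Lp.memLp g), integral_inner_eta_self, one_mul,
      ENNReal.toReal_ofReal Real.pi_pos.le, Complex.real_smul, ← mul_assoc, ← Complex.ofReal_mul,
      one_div_mul_cancel Real.pi_ne_zero, Complex.ofReal_one, one_mul]
    simp_rw [RCLike.inner_apply']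
end

section
/- Let V be a complex inner product space (inner product conjugate-linear in the first argument), let D and D' be subspaces of V, let a, b : D → D and a', b' : D' → D' be linear maps such that: (i) a(b f) − b(a f) = f for all f ∈ D; (ii) ⟨a' g, f⟩ = ⟨g, a f⟩ and ⟨b' g, f⟩ = ⟨g, b f⟩ for all f ∈ D, g ∈ D'. Let φ_0 ∈ D with a φ_0 = 0 and Ψ_0 ∈ D' with b' Ψ_0 = 0, normalized so that ⟨Ψ_0, φ_0⟩ = 1, and set φ_n = (n!)^{-1/2}·bⁿ φ_0 and Ψ_n = (n!)^{-1/2}·(a')ⁿ Ψ_0. Then ⟨Ψ_n, φ_m⟩ = δ_{nm} for all n, m ∈ ℕ, i.e. the two families are biorthogonal. -/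
open scoped InnerProductSpace ComplexConjugate

/-!
Since `[a, b] = 1` and `a` annihilates `φ₀`, the operator `a` acts on the vectors `bᵐ φ₀` as
differentiation acts on monomials, so `aⁿ bᵐ φ₀ = m (m - 1) ⋯ (m - n + 1) bᵐ⁻ⁿ φ₀`. Moving the
powers of `a'` across the pairing therefore gives
`⟨a'ⁿ Ψ₀, bᵐ φ₀⟩ = m (m - 1) ⋯ (m - n + 1) ⟨Ψ₀, bᵐ⁻ⁿ φ₀⟩`. For `m < n` the coefficient vanishes,
and for `n < m` the remaining powers of `b` move to the left, where `b'` annihilates `Ψ₀`.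
-/

section CanonicalCommutation

variable {A M : Type*} [Semiring A] [AddCommMonoid M] [Module A M] {a b : A} {φ : M}

theorem mul_pow_eq_pow_mul_add_nsmul (hab : a * b = b * a + 1) (m : ℕ) :
    a * b ^ m = b ^ m * a + m • b ^ (m - 1) := by
  induction m with
  | zero => simp
  | succ m ih =>
    have hpow : m • (b ^ (m - 1) * b) = m • b ^ m := by
      cases m with
      | zero => simp
      | succ k => rw [Nat.add_sub_cancel, ← pow_succ]
    calc a * b ^ (m + 1) = b ^ m * (a * b) + m • (b ^ (m - 1) * b) := by
          rw [pow_succ, ← mul_assoc, ih, add_mul, mul_assoc, smul_mul_assoc]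
      _ = b ^ (m + 1) * a + (m + 1) • b ^ m := by
          rw [hab, hpow, mul_add, ← mul_assoc, ← pow_succ, mul_one, add_assoc, ← succ_nsmul']

theorem smul_pow_smul_vacuum (hab : a * b = b * a + 1) (hφ : a • φ = 0) (m : ℕ) :
    a • b ^ m • φ = m • b ^ (m - 1) • φ := by
  rw [← mul_smul, mul_pow_eq_pow_mul_add_nsmul hab, add_smul, mul_smul, hφ, smul_zero, zero_add,
    smul_assoc]

theorem pow_smul_pow_smul_vacuum (hab : a * b = b * a + 1) (hφ : a • φ = 0) (n m : ℕ) :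
    a ^ n • b ^ m • φ = m.descFactorial n • b ^ (m - n) • φ := by
  induction n with
  | zero => simp
  | succ n ih =>
    rw [pow_succ', mul_smul, ih, smul_comm, smul_pow_smul_vacuum hab hφ, ← mul_nsmul,
      ← Nat.descFactorial_succ, Nat.sub_sub]

end CanonicalCommutation

theorem pairing_iterate_left_eq_iterate_right {X Y Z : Type*} {B : X → Y → Z} {f : X → X}
    {g : Y → Y} (hfg : ∀ x y, B (f x) y = B x (g y)) (n : ℕ) (x : X) (y : Y) :
    B (f^[n] x) y = B x (g^[n] y) := by
  induction n generalizing x with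
  | zero => rfl
  | succ n ih => rw [Function.iterate_succ_apply, ih, hfg, ← Function.iterate_succ_apply' g]

section Pairing

variable {R S T E F P : Type*} [Semiring R] [Semiring S] [CommSemiring T] {σ : R →+* T}
  {τ : S →+* T} [AddCommMonoid E] [Module R E] [AddCommMonoid F] [Module S F] [AddCommMonoid P]
  [Module T P] {B : E →ₛₗ[σ] F →ₛₗ[τ] P} {a b : Module.End S F} {a' b' : Module.End R E}
  {φ : F} {ψ : E}

theorem pairing_pow_left_eq_pow_right (ha' : ∀ g f, B (a' g) f = B g (a f)) (n : ℕ) (g : E)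
    (f : F) : B ((a' ^ n) g) f = B g ((a ^ n) f) := by
  simpa only [Module.End.pow_apply] using
    pairing_iterate_left_eq_iterate_right (B := fun g f => B g f) ha' n g f

theorem pairing_pow_apply_right_eq_zero (hb' : ∀ g f, B (b' g) f = B g (b f)) (hψ : b' ψ = 0)
    {k : ℕ} (hk : k ≠ 0) (f : F) : B ψ ((b ^ k) f) = 0 := by
  have hpow : (b' ^ k) ψ = 0 :=
    Module.End.pow_map_zero_of_le (Nat.one_le_iff_ne_zero.2 hk) (by rwa [pow_one])
  rw [← pairing_pow_left_eq_pow_right hb', hpow, map_zero, LinearMap.zero_apply]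

theorem pairing_pow_vacuum_pow_vacuum (hab : a * b = b * a + 1)
    (ha' : ∀ g f, B (a' g) f = B g (a f)) (hb' : ∀ g f, B (b' g) f = B g (b f))
    (hφ : a φ = 0) (hψ : b' ψ = 0) (n m : ℕ) :
    B ((a' ^ n) ψ) ((b ^ m) φ) = if n = m then n.factorial • B ψ φ else 0 := by
  have hlower : B ((a' ^ n) ψ) ((b ^ m) φ) = m.descFactorial n • B ψ ((b ^ (m - n)) φ) := by
    rw [pairing_pow_left_eq_pow_right ha', ← map_nsmul]
    exact congrArg (B ψ) (pow_smul_pow_smul_vacuum hab hφ n m)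
  rw [hlower]
  rcases lt_trichotomy n m with hlt | rfl | hgt
  · rw [pairing_pow_apply_right_eq_zero hb' hψ (Nat.sub_ne_zero_of_lt hlt), smul_zero,
      if_neg hlt.ne]
  · rw [Nat.descFactorial_self, Nat.sub_self, pow_zero, Module.End.one_apply, if_pos rfl]
  · rw [Nat.descFactorial_of_lt hgt, zero_smul, if_neg hgt.ne']

end Pairing

theorem conj_one_div_sqrt_mul_one_div_sqrt_mul_self {𝕜 : Type*} [RCLike 𝕜] {x : ℝ} (hx : 0 < x) :
    conj (1 / ((Real.sqrt x : ℝ) : 𝕜)) * (1 / ((Real.sqrt x : ℝ) : 𝕜)) * (x : 𝕜) = 1 := by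
  have hreal : 1 / Real.sqrt x * (1 / Real.sqrt x) * x = 1 := by
    rw [div_mul_div_comm, Real.mul_self_sqrt hx.le, one_mul, one_div_mul_cancel hx.ne']
  rw [map_div₀, map_one, RCLike.conj_ofReal]
  exact_mod_cast congrArg (RCLike.ofReal (K := 𝕜)) hreal

theorem stmt_18_general {𝕜 E F : Type*} [RCLike 𝕜] [AddCommGroup E] [Module 𝕜 E]
    [AddCommGroup F] [Module 𝕜 F] (B : E →ₗ⋆[𝕜] F →ₗ[𝕜] 𝕜) (a b : F →ₗ[𝕜] F) (a' b' : E →ₗ[𝕜] E)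
    (hcomm : ∀ f, a (b f) - b (a f) = f) (ha' : ∀ g f, B (a' g) f = B g (a f))
    (hb' : ∀ g f, B (b' g) f = B g (b f)) (φ0 : F) (hφ0 : a φ0 = 0) (Ψ0 : E) (hΨ0 : b' Ψ0 = 0)
    (hnorm : B Ψ0 φ0 = 1) (n m : ℕ) :
    B ((1 / ((Real.sqrt n.factorial : ℝ) : 𝕜)) • (a' ^ n) Ψ0)
      ((1 / ((Real.sqrt m.factorial : ℝ) : 𝕜)) • (b ^ m) φ0) = if n = m then 1 else 0 := by
  have hab : a * b = b * a + 1 := LinearMap.ext fun f => sub_eq_iff_eq_add'.1 (hcomm f)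
  rw [LinearMap.map_smulₛₗ₂, map_smul, pairing_pow_vacuum_pow_vacuum hab ha' hb' hφ0 hΨ0, hnorm]
  split_ifs with hnm
  · subst hnm
    have hfact : (0 : ℝ) < n.factorial := Nat.cast_pos.2 n.factorial_pos
    simpa [mul_assoc] using conj_one_div_sqrt_mul_one_div_sqrt_mul_self (𝕜 := 𝕜) hfact
  · rw [smul_zero, smul_zero]

theorem stmt_18 {V : Type*} [NormedAddCommGroup V] [InnerProductSpace ℂ V]
    (D D' : Submodule ℂ V) (a b : D →ₗ[ℂ] D) (a' b' : D' →ₗ[ℂ] D')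
    (hcomm : ∀ f : D, a (b f) - b (a f) = f)
    (ha' : ∀ (g : D') (f : D), ⟪((a' g : D') : V), ((f : D) : V)⟫_ℂ = ⟪((g : D') : V), ((a f : D) : V)⟫_ℂ)
    (hb' : ∀ (g : D') (f : D), ⟪((b' g : D') : V), ((f : D) : V)⟫_ℂ = ⟪((g : D') : V), ((b f : D) : V)⟫_ℂ)
    (φ0 : D) (hφ0 : a φ0 = 0) (Ψ0 : D') (hΨ0 : b' Ψ0 = 0)
    (hnorm : ⟪((Ψ0 : D') : V), ((φ0 : D) : V)⟫_ℂ = 1) :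
    ∀ n m : ℕ,
      ⟪((((1 / ((Real.sqrt n.factorial : ℝ) : ℂ)) • ((a' ^ n) Ψ0) : D') : V)),
        ((((1 / ((Real.sqrt m.factorial : ℝ) : ℂ)) • ((b ^ m) φ0) : D) : V))⟫_ℂ =
      if n = m then 1 else 0 := by
  exact stmt_18_general ((innerₛₗ ℂ).domRestrict₁₂ D' D) a b a' b' hcomm ha' hb' φ0 hφ0 Ψ0 hΨ0 hnorm
end
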